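/- arXiv:2402.08619 — 3 statements merged into one kernel-verified Lean document; each statement's English description precedes it below -/
import Mathlib

section
/- Complementing basis chosen from a dense subspace: let X be a real normed space, let Y be a closed linear subspace of X such that the quotient X/Y has finite dimension p ≥ 1, and let D be a dense linear subspace of X. Then there exist elements a₁, …, a_p ∈ D such that Y ∩ span{a₁, …, a_p} = {0} and Y + span{a₁, …, a_p} = X; in particular a₁, …, a_p are linearly independent and span a complement of Y in X. -/
/-!
A subspace containing a closed subspace `Y` of finite codimension is itself closed, so `Y + D` is
both closed and dense, hence everything. Thus any set spanning `D` has an image spanning `X ⧸ Y`,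
and a basis of `X ⧸ Y` extracted from that image lifts to the required family.
-/

open Module Submodule Set

section Algebra

theorem isCompl_ker_span_range_of_comp {R M N ι : Type*} [Ring R] [AddCommGroup M] [AddCommGroup N]
    [Module R M] [Module R N] {f : M →ₗ[R] N} {v : ι → M}
    (hli : LinearIndependent R (f ∘ v)) (hspan : span R (range (f ∘ v)) = ⊤) :
    IsCompl (LinearMap.ker f) (span R (range v)) := by
  have map_span_eq_top : (span R (range v)).map f = ⊤ := by
    rw [Submodule.map_span, ← range_comp, hspan]
  have range_eq_top : LinearMap.range f = ⊤ :=
    top_unique (map_span_eq_top ▸ LinearMap.map_le_range)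
  refine IsCompl.symm ⟨range_ker_disjoint hli, codisjoint_iff.2 ?_⟩
  exact (LinearMap.map_eq_top_iff range_eq_top).1 map_span_eq_top

variable {K V : Type*} [DivisionRing K] [AddCommGroup V] [Module K V]

theorem exists_linearIndependent_comp_mkQ_of_sup_span_eq_top {Y : Submodule K V}
    [FiniteDimensional K (V ⧸ Y)] {s : Set V} (hs : Y ⊔ span K s = ⊤) :
    ∃ v : Fin (finrank K (V ⧸ Y)) → V, (∀ i, v i ∈ s) ∧
      LinearIndependent K (Y.mkQ ∘ v) ∧ span K (range (Y.mkQ ∘ v)) = ⊤ := by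
  have span_image : span K (Y.mkQ '' s) = ⊤ := by
    rwa [← Submodule.map_span, map_mkQ_eq_top]
  have exists_basis_in_image := exists_fun_fin_finrank_span_eq K (Y.mkQ '' s)
  rw [span_image, finrank_top] at exists_basis_in_image
  obtain ⟨w, hws, hw_span, hw_li⟩ := exists_basis_in_image
  choose v hvs hvw using hws
  obtain rfl : Y.mkQ ∘ v = w := funext hvw
  exact ⟨v, hvs, hw_li, hw_span⟩

end Algebra

section Topology

variable {𝕜 E : Type*} [NontriviallyNormedField 𝕜] [CompleteSpace 𝕜]
  [AddCommGroup E] [Module 𝕜 E] [TopologicalSpace E] [IsTopologicalAddGroup E]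
  [ContinuousSMul 𝕜 E]

theorem sup_eq_top_of_isClosed_of_dense {Y D : Submodule 𝕜 E} [FiniteDimensional 𝕜 (E ⧸ Y)]
    (hY : IsClosed (Y : Set E)) (hD : Dense (D : Set E)) : Y ⊔ D = ⊤ := by
  have closed_sup : IsClosed ((Y ⊔ D : Submodule 𝕜 E) : Set E) :=
    isClosed_mono_of_finiteDimensional_quotient hY le_sup_left
  have dense_sup : Dense ((Y ⊔ D : Submodule 𝕜 E) : Set E) :=
    hD.mono (SetLike.coe_subset_coe.2 le_sup_right)
  exact SetLike.coe_injective (closed_sup.closure_eq.symm.trans dense_sup.closure_eq)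

theorem complement_basis_from_dense_subspace_general (Y : Submodule 𝕜 E)
    [FiniteDimensional 𝕜 (E ⧸ Y)] (hY : IsClosed (Y : Set E)) (p : ℕ)
    (hcodim : finrank 𝕜 (E ⧸ Y) = p) (s : Set E) (hs : Dense (span 𝕜 s : Set E)) :
    ∃ a : Fin p → E, (∀ i, a i ∈ s) ∧ LinearIndependent 𝕜 a ∧
      Y ⊓ span 𝕜 (range a) = ⊥ ∧ Y ⊔ span 𝕜 (range a) = ⊤ := by
  subst hcodim
  obtain ⟨a, has, hli, hspan⟩ := exists_linearIndependent_comp_mkQ_of_sup_span_eq_top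
    (sup_eq_top_of_isClosed_of_dense hY hs)
  have hcompl : IsCompl Y (span 𝕜 (range a)) := by
    simpa only [ker_mkQ] using isCompl_ker_span_range_of_comp hli hspan
  exact ⟨a, has, hli.of_comp Y.mkQ, hcompl.inf_eq_bot, hcompl.sup_eq_top⟩

end Topology

/-- Complementing basis chosen from a dense subspace: if `Y` is a closed subspace
of a real normed space `X` with `dim (X/Y) = p ≥ 1` and `D` is a dense subspace
of `X`, then there exist `a₁, …, a_p ∈ D` which are linearly independent and
span an algebraic complement of `Y` in `X`. -/
theorem complement_basis_from_dense_subspace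
    {X : Type*} [NormedAddCommGroup X] [NormedSpace ℝ X]
    (Y : Submodule ℝ X) (hY : IsClosed (Y : Set X))
    (p : ℕ) (hp : 1 ≤ p) (hcodim : Module.finrank ℝ (X ⧸ Y) = p)
    (D : Submodule ℝ X) (hD : Dense (D : Set X)) :
    ∃ a : Fin p → X, (∀ i, a i ∈ D) ∧ LinearIndependent ℝ a ∧
      Y ⊓ Submodule.span ℝ (Set.range a) = ⊥ ∧
      Y ⊔ Submodule.span ℝ (Set.range a) = ⊤ := by
  have : FiniteDimensional ℝ (X ⧸ Y) := FiniteDimensional.of_finrank_pos (hcodim ▸ hp)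
  exact complement_basis_from_dense_subspace_general Y hY p hcodim D (by rwa [span_eq])
end

section
/- Unique continuation for second-order Hessian systems in Euclidean space: let n ≥ 1 and let Ω ⊆ ℝⁿ be a nonempty open connected set. Let u : ℝⁿ → ℝ be twice continuously differentiable on Ω, and let A assign to each x ∈ Ω a continuous bilinear form A(x) on ℝⁿ, depending continuously on x ∈ Ω. Assume that the Hessian of u satisfies D²u(x)(v, w) = u(x) · A(x)(v, w) for all x ∈ Ω and all v, w ∈ ℝⁿ. If there exists a point p ∈ Ω with u(p) = 0 and Du(p) = 0, then u vanishes identically on Ω. -/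
/-!
The 1-jet `J = (u, Du)` of a solution satisfies `DJ = O(J)` locally, so by Grönwall's inequality
along segments, if it vanishes at a point then it vanishes near that point. By continuity its zero
set is also relatively closed, hence it is all of a connected domain.
-/

open Set Filter Asymptotics Topology

section FirstOrder

variable {E G : Type*} [NormedAddCommGroup E] [NormedSpace ℝ E]
  [NormedAddCommGroup G] [NormedSpace ℝ G]

theorem eqOn_zero_of_norm_hasFDerivWithin_le_mul_norm {f : E → G} {f' : E → E →L[ℝ] G}
    {s : Set E} {K : ℝ} (hs : Convex ℝ s) (hf : ∀ x ∈ s, HasFDerivWithinAt f (f' x) s x)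
    (hbound : ∀ x ∈ s, ‖f' x‖ ≤ K * ‖f x‖) {z : E} (hz : z ∈ s) (hfz : f z = 0) :
    EqOn f 0 s := by
  intro y hy
  set γ : ℝ → E := ⇑(AffineMap.lineMap z y : ℝ →ᵃ[ℝ] E)
  have hγ : MapsTo γ (Icc 0 1) s := fun t ht => hs.lineMap_mem hz hy ht
  have hderiv : ∀ t ∈ Icc (0 : ℝ) 1,
      HasDerivWithinAt (f ∘ γ) (f' (γ t) (y - z)) (Icc 0 1) t := fun t ht =>
    (hf _ (hγ ht)).comp_hasDerivWithinAt t AffineMap.hasDerivWithinAt_lineMap hγ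
  have hgronwall : ∀ t ∈ Ico (0 : ℝ) 1,
      ‖f' (γ t) (y - z)‖ ≤ K * ‖y - z‖ * ‖(f ∘ γ) t‖ := fun t ht =>
    calc ‖f' (γ t) (y - z)‖ ≤ ‖f' (γ t)‖ * ‖y - z‖ := (f' (γ t)).le_opNorm _
      _ ≤ K * ‖f (γ t)‖ * ‖y - z‖ := by
        gcongr
        exact hbound _ (hγ (Ico_subset_Icc_self ht))
      _ = K * ‖y - z‖ * ‖(f ∘ γ) t‖ := mul_right_comm _ _ _
  have hend : (f ∘ γ) 1 = 0 :=
    eq_zero_of_abs_deriv_le_mul_abs_self_of_eq_zero_right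
      (fun t ht => (hderiv t ht).continuousWithinAt)
      (fun t ht => (hderiv t (Ico_subset_Icc_self ht)).mono_of_mem_nhdsWithin
        (Icc_mem_nhdsGE_of_mem ht))
      (by simpa [γ] using hfz) hgronwall 1 (right_mem_Icc.2 zero_le_one)
  simpa [γ] using hend

theorem eventuallyEq_zero_of_fderiv_isBigO_self {f : E → G} {x : E}
    (hf : ∀ᶠ y in 𝓝 x, DifferentiableAt ℝ f y) (hbound : fderiv ℝ f =O[𝓝 x] f) (hfx : f x = 0) :
    f =ᶠ[𝓝 x] 0 := by
  obtain ⟨K, hK⟩ := hbound.bound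
  obtain ⟨r, hr, hball⟩ := Metric.eventually_nhds_iff_ball.1 (hf.and hK)
  exact (eqOn_zero_of_norm_hasFDerivWithin_le_mul_norm (convex_ball x r)
    (fun y hy => (hball y hy).1.hasFDerivAt.hasFDerivWithinAt) (fun y hy => (hball y hy).2)
    (Metric.mem_ball_self hr) hfx).eventuallyEq_of_mem (Metric.ball_mem_nhds x hr)

theorem eqOn_zero_of_fderiv_isBigO_self {f : E → G} {Ω : Set E} (hΩopen : IsOpen Ω)
    (hΩconn : IsPreconnected Ω) (hf : DifferentiableOn ℝ f Ω)
    (hbound : ∀ x ∈ Ω, fderiv ℝ f =O[𝓝 x] f) {p : E} (hp : p ∈ Ω) (hfp : f p = 0) :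
    EqOn f 0 Ω := by
  have hlocal : ∀ x ∈ Ω, f x = 0 → f =ᶠ[𝓝 x] 0 := fun x hx =>
    eventuallyEq_zero_of_fderiv_isBigO_self (hf.eventually_differentiableAt (hΩopen.mem_nhds hx))
      (hbound x hx)
  have hsub : Ω ⊆ {x | f =ᶠ[𝓝 x] 0} := by
    refine hΩconn.subset_of_closure_inter_subset isOpen_setOfPred_eventually_nhds
      ⟨p, hp, hlocal p hp hfp⟩ ?_
    rintro x ⟨hx_closure, hx⟩
    have hzero : ∃ᶠ y in 𝓝 x, f y = 0 :=
      (mem_closure_iff_frequently.1 hx_closure).mono fun _ hy => hy.eq_of_nhds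
    have hcont : ContinuousAt f x := hf.continuousOn.continuousAt (hΩopen.mem_nhds hx)
    exact hlocal x hx (isClosed_singleton.mem_of_frequently_of_tendsto hzero hcont)
  exact fun x hx => (hsub hx).eq_of_nhds

end FirstOrder

section SecondOrder

variable {E F : Type*} [NormedAddCommGroup E] [NormedSpace ℝ E]
  [NormedAddCommGroup F] [NormedSpace ℝ F]

/-- The 1-jet of `u` at `x`, as the pair of its value and its Fréchet derivative. It turns a
second-order equation for `u` into a first-order one. -/
noncomputable def oneJet (u : E → F) (x : E) : F × (E →L[ℝ] F) :=
  (u x, fderiv ℝ u x)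

theorem isBigO_oneJet (u : E → F) (l : Filter E) : u =O[l] oneJet u :=
  isBigO_of_le l fun x => norm_fst_le (oneJet u x)

theorem fderiv_isBigO_oneJet (u : E → F) (l : Filter E) : fderiv ℝ u =O[l] oneJet u :=
  isBigO_of_le l fun x => norm_snd_le (oneJet u x)

theorem fderiv_oneJet {u : E → F} {x : E} (hu : DifferentiableAt ℝ u x)
    (hDu : DifferentiableAt ℝ (fderiv ℝ u) x) :
    fderiv ℝ (oneJet u) x = (fderiv ℝ u x).prod (fderiv ℝ (fderiv ℝ u) x) :=
  hu.fderiv_prodMk hDu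

theorem fderiv_oneJet_isBigO_oneJet {u : E → F} {x : E}
    (hu : ∀ᶠ y in 𝓝 x, DifferentiableAt ℝ u y)
    (hDu : ∀ᶠ y in 𝓝 x, DifferentiableAt ℝ (fderiv ℝ u) y)
    (hbound : fderiv ℝ (fderiv ℝ u) =O[𝓝 x] oneJet u) :
    fderiv ℝ (oneJet u) =O[𝓝 x] oneJet u := by
  have hpair : (fun y => (fderiv ℝ u y, fderiv ℝ (fderiv ℝ u) y)) =O[𝓝 x] oneJet u :=
    IsBigO.prod_left (E' := E →L[ℝ] F) (F' := E →L[ℝ] E →L[ℝ] F)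
      (fderiv_isBigO_oneJet u (𝓝 x)) hbound
  obtain ⟨K, hK⟩ := hpair.bound
  refine IsBigO.of_bound K ?_
  filter_upwards [hu, hDu, hK] with y hy hDy hKy
  rwa [fderiv_oneJet hy hDy, ContinuousLinearMap.opNorm_prod]

theorem eqOn_zero_of_fderiv_fderiv_isBigO_oneJet {u : E → F} {Ω : Set E} (hΩopen : IsOpen Ω)
    (hΩconn : IsPreconnected Ω) (hu : DifferentiableOn ℝ u Ω)
    (hDu : DifferentiableOn ℝ (fderiv ℝ u) Ω)
    (hbound : ∀ x ∈ Ω, fderiv ℝ (fderiv ℝ u) =O[𝓝 x] oneJet u)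
    {p : E} (hp : p ∈ Ω) (hup : u p = 0) (hDup : fderiv ℝ u p = 0) :
    EqOn u 0 Ω := by
  have hjet : EqOn (oneJet u) 0 Ω :=
    eqOn_zero_of_fderiv_isBigO_self hΩopen hΩconn (hu.prodMk hDu)
      (fun x hx => fderiv_oneJet_isBigO_oneJet
        (hu.eventually_differentiableAt (hΩopen.mem_nhds hx))
        (hDu.eventually_differentiableAt (hΩopen.mem_nhds hx)) (hbound x hx))
      hp (Prod.ext hup hDup)
  exact fun x hx => congrArg Prod.fst (hjet hx)

theorem unique_continuation_hessian_system_general {u : E → F} {Ω : Set E} (hΩopen : IsOpen Ω)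
    (hΩconn : IsPreconnected Ω) (hu : DifferentiableOn ℝ u Ω)
    (hDu : DifferentiableOn ℝ (fderiv ℝ u) Ω) {A : E → E →L[ℝ] E →L[ℝ] ℝ}
    (hA : ∀ x ∈ Ω, IsBoundedUnder (· ≤ ·) (𝓝 x) fun y => ‖A y‖)
    (hHess : ∀ x ∈ Ω, ∀ v w : E, fderiv ℝ (fderiv ℝ u) x v w = A x v w • u x)
    {p : E} (hp : p ∈ Ω) (hup : u p = 0) (hDup : fderiv ℝ u p = 0) :
    EqOn u 0 Ω := by
  refine eqOn_zero_of_fderiv_fderiv_isBigO_oneJet hΩopen hΩconn hu hDu (fun x hx => ?_) hp hup hDup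
  have hHess_le : ∀ y ∈ Ω, ‖fderiv ℝ (fderiv ℝ u) y‖ ≤ ‖A y‖ * ‖u y‖ := fun y hy => by
    refine ContinuousLinearMap.opNorm_le_bound₂ _ (by positivity) fun v w => ?_
    calc ‖fderiv ℝ (fderiv ℝ u) y v w‖ = ‖A y v w‖ * ‖u y‖ := by rw [hHess y hy, norm_smul]
      _ ≤ ‖A y‖ * ‖v‖ * ‖w‖ * ‖u y‖ := by
        gcongr
        exact (A y).le_opNorm₂ v w
      _ = ‖A y‖ * ‖u y‖ * ‖v‖ * ‖w‖ := by ring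
  obtain ⟨M, hM⟩ := (hA x hx).eventually_le
  have hHess_isBigO : fderiv ℝ (fderiv ℝ u) =O[𝓝 x] u := by
    refine IsBigO.of_bound M ?_
    filter_upwards [hΩopen.mem_nhds hx, hM] with y hy hAy
    exact (hHess_le y hy).trans (by gcongr)
  exact hHess_isBigO.trans (isBigO_oneJet u (𝓝 x))

end SecondOrder

/-- Unique continuation for second-order Hessian systems in Euclidean space:
if `u` is `C²` on a nonempty open connected set `Ω ⊆ ℝⁿ` and its Hessian
satisfies `D²u(x)(v,w) = u(x) · A(x)(v,w)` on `Ω` for a continuous family of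
continuous bilinear forms `A`, and the 1-jet of `u` vanishes at some `p ∈ Ω`,
then `u ≡ 0` on `Ω`. -/
theorem unique_continuation_hessian_system
    {n : ℕ} (hn : 1 ≤ n) (Ω : Set (EuclideanSpace ℝ (Fin n)))
    (hΩopen : IsOpen Ω) (hΩconn : IsConnected Ω)
    (u : EuclideanSpace ℝ (Fin n) → ℝ)
    (hu : ContDiffOn ℝ 2 u Ω)
    (A : EuclideanSpace ℝ (Fin n) →
      (EuclideanSpace ℝ (Fin n) →L[ℝ] EuclideanSpace ℝ (Fin n) →L[ℝ] ℝ))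
    (hA : ContinuousOn A Ω)
    (hHess : ∀ x ∈ Ω, ∀ v w : EuclideanSpace ℝ (Fin n),
      fderiv ℝ (fderiv ℝ u) x v w = u x * A x v w)
    (p : EuclideanSpace ℝ (Fin n)) (hp : p ∈ Ω)
    (hup : u p = 0) (hDup : fderiv ℝ u p = 0) :
    ∀ x ∈ Ω, u x = 0 := by
  have hDu : ContDiffOn ℝ 1 (fderiv ℝ u) Ω := hu.fderiv_of_isOpen hΩopen one_add_one_eq_two.le
  have hA_norm : ContinuousOn (fun y => ‖A y‖) Ω :=
    ContinuousOn.norm (E := EuclideanSpace ℝ (Fin n) →L[ℝ] EuclideanSpace ℝ (Fin n) →L[ℝ] ℝ) hA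
  exact unique_continuation_hessian_system_general hΩopen hΩconn.isPreconnected
    (hu.differentiableOn two_ne_zero) (hDu.differentiableOn one_ne_zero)
    (fun x hx => (hA_norm.continuousAt (hΩopen.mem_nhds hx)).isBoundedUnder_le)
    (fun x hx v w => (hHess x hx v w).trans (mul_comm _ _)) hp hup hDup
end

section
/- Dimension bound for Hessian systems in Euclidean space: let n ≥ 1 and let Ω ⊆ ℝⁿ be a nonempty open connected set, and let A assign to each x ∈ Ω a continuous bilinear form A(x) on ℝⁿ, depending continuously on x ∈ Ω. Then any n + 2 functions u₀, …, u_{n+1} : ℝⁿ → ℝ, each twice continuously differentiable on Ω and each satisfying D²uᵢ(x)(v, w) = uᵢ(x) · A(x)(v, w) for all x ∈ Ω and v, w ∈ ℝⁿ, are linearly dependent on Ω: there exist real numbers c₀, …, c_{n+1}, not all zero, such that c₀u₀(x) + ⋯ + c_{n+1}u_{n+1}(x) = 0 for all x ∈ Ω. -/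
/-!
A Hessian system prescribes all derivatives of the `1`-jet `j = (u, Du)` linearly in terms of `j`
itself, so `j` is a parallel section of a linear connection. Along a segment a parallel section
solves a linear ODE, so by Grönwall's inequality its zero set is open; it is also relatively closed,
and therefore a parallel section vanishing at one point of a connected open set vanishes throughout.
Parallel sections are thus determined by their value at a point, a vector in the space of `1`-jets,
which for scalar functions on `ℝⁿ` has dimension `n + 1`.
-/

open Set Filter Topology Module

set_option maxSynthPendingDepth 3

section UniqueContinuation

variable {E G : Type*} [NormedAddCommGroup E] [NormedSpace ℝ E]
  [NormedAddCommGroup G] [NormedSpace ℝ G]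
  {f : E → G} {f' : E → E →L[ℝ] G} {s : Set E} {x : E}

theorem eqOn_zero_of_norm_fderiv_le_mul_norm_of_starConvex {K : ℝ} (hs : StarConvex ℝ x s)
    (hf : ∀ y ∈ s, HasFDerivWithinAt f (f' y) s y) (hbound : ∀ y ∈ s, ‖f' y‖ ≤ K * ‖f y‖)
    (hx : f x = 0) : EqOn f 0 s := by
  intro y hy
  let γ : ℝ → E := AffineMap.lineMap x y
  have hγ_mem : MapsTo γ (Icc 0 1) s := fun t ht ↦
    hs.segment_subset hy (segment_eq_image_lineMap ℝ x y ▸ mem_image_of_mem _ ht)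
  have hderiv : ∀ t ∈ Icc (0 : ℝ) 1,
      HasDerivWithinAt (f ∘ γ) (f' (γ t) (y - x)) (Icc 0 1) t := fun t ht ↦
    (hf _ (hγ_mem ht)).comp_hasDerivWithinAt t AffineMap.hasDerivWithinAt_lineMap hγ_mem
  have hderiv_bound : ∀ t ∈ Icc (0 : ℝ) 1,
      ‖f' (γ t) (y - x)‖ ≤ K * ‖y - x‖ * ‖(f ∘ γ) t‖ := fun t ht ↦
    calc ‖f' (γ t) (y - x)‖ ≤ ‖f' (γ t)‖ * ‖y - x‖ := (f' (γ t)).le_opNorm _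
      _ ≤ K * ‖f (γ t)‖ * ‖y - x‖ := by gcongr; exact hbound _ (hγ_mem ht)
      _ = K * ‖y - x‖ * ‖(f ∘ γ) t‖ := mul_right_comm _ _ _
  have hzero : (f ∘ γ) 1 = 0 :=
    eq_zero_of_abs_deriv_le_mul_abs_self_of_eq_zero_right
      (fun t ht ↦ (hderiv t ht).continuousWithinAt)
      (fun t ht ↦ (hderiv t (Ico_subset_Icc_self ht)).mono_of_mem_nhdsWithin
        (Icc_mem_nhdsGE_of_mem ht))
      (by simpa [γ] using hx) (fun t ht ↦ hderiv_bound t (Ico_subset_Icc_self ht))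
      1 (right_mem_Icc.2 zero_le_one)
  simpa [γ] using hzero

theorem eventuallyEq_zero_of_norm_fderiv_le_mul_norm {K : ℝ}
    (hf : ∀ᶠ y in 𝓝 x, HasFDerivAt f (f' y) y) (hbound : ∀ᶠ y in 𝓝 x, ‖f' y‖ ≤ K * ‖f y‖)
    (hx : f x = 0) : f =ᶠ[𝓝 x] 0 := by
  obtain ⟨ε, hε, hball⟩ := Metric.eventually_nhds_iff_ball.1 (hf.and hbound)
  exact (eqOn_zero_of_norm_fderiv_le_mul_norm_of_starConvex
    ((convex_ball x ε).starConvex (Metric.mem_ball_self hε))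
    (fun y hy ↦ (hball y hy).1.hasFDerivWithinAt) (fun y hy ↦ (hball y hy).2)
    hx).eventuallyEq_of_mem (Metric.ball_mem_nhds x hε)

theorem eqOn_zero_of_norm_fderiv_le_mul_norm_of_isPreconnected (hs : IsOpen s)
    (hs' : IsPreconnected s) (hf : ∀ y ∈ s, HasFDerivAt f (f' y) y)
    (hbound : ∀ y ∈ s, ∃ K : ℝ, ∀ᶠ z in 𝓝 y, ‖f' z‖ ≤ K * ‖f z‖)
    (hxs : x ∈ s) (hx : f x = 0) : EqOn f 0 s := by
  have eventually_zero : ∀ y ∈ s, f y = 0 → f =ᶠ[𝓝 y] 0 := fun y hy hy0 ↦ by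
    obtain ⟨K, hK⟩ := hbound y hy
    exact eventuallyEq_zero_of_norm_fderiv_le_mul_norm ((hs.eventually_mem hy).mono hf) hK hy0
  have subset_zero : s ⊆ {y | f =ᶠ[𝓝 y] 0} := by
    refine hs'.subset_of_closure_inter_subset isOpen_setOfPred_eventually_nhds
      ⟨x, hxs, eventually_zero x hxs hx⟩ fun y ⟨hy_closure, hys⟩ ↦ eventually_zero y hys ?_
    by_contra hy
    obtain ⟨z, hz, hz'⟩ := ((mem_closure_iff_frequently.1 hy_closure).and_eventually
      ((hf y hys).continuousAt.eventually_ne hy)).exists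
    exact hz' hz.eq_of_nhds
  exact fun y hy ↦ (subset_zero hy).eq_of_nhds

end UniqueContinuation

section ParallelSections

variable {E G ι : Type*} [NormedAddCommGroup E] [NormedSpace ℝ E]
  [NormedAddCommGroup G] [NormedSpace ℝ G]

/-- `f` is a parallel section over `Ω`, for the linear connection `∇f = Df - Γ f` on the trivial
bundle `E × G`. The connection is encoded by its form `Γ`, with the fibre argument first and the
direction of differentiation second. -/
def IsParallelOn (Γ : E → G →L[ℝ] E →L[ℝ] G) (f : E → G) (Ω : Set E) : Prop :=
  ∀ x ∈ Ω, HasFDerivAt f (Γ x (f x)) x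

namespace IsParallelOn

variable {Γ : E → G →L[ℝ] E →L[ℝ] G} {Ω : Set E}

theorem sum_smul [Fintype ι] {f : ι → E → G} (hf : ∀ i, IsParallelOn Γ (f i) Ω) (c : ι → ℝ) :
    IsParallelOn Γ (fun x ↦ ∑ i, c i • f i x) Ω := fun x hx ↦ by
  simpa only [map_sum, map_smul] using
    HasFDerivAt.fun_sum fun i _ ↦ (hf i x hx).fun_const_smul (c i)

theorem eqOn_zero {f : E → G} (hf : IsParallelOn Γ f Ω) (hΩ : IsOpen Ω) (hΩ' : IsPreconnected Ω)
    (hΓ : ∀ x ∈ Ω, IsBoundedUnder (· ≤ ·) (𝓝 x) fun y ↦ ‖Γ y‖) {p : E} (hp : p ∈ Ω)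
    (hfp : f p = 0) : EqOn f 0 Ω := by
  refine eqOn_zero_of_norm_fderiv_le_mul_norm_of_isPreconnected hΩ hΩ' hf (fun x hx ↦ ?_) hp hfp
  obtain ⟨K, hK⟩ := (hΓ x hx).eventually_le
  exact ⟨K, hK.mono fun y hy ↦ (Γ y).le_of_opNorm_le hy (f y)⟩

theorem exists_sum_smul_eqOn_zero [FiniteDimensional ℝ G] [Fintype ι]
    (hι : finrank ℝ G < Fintype.card ι) {f : ι → E → G} (hf : ∀ i, IsParallelOn Γ (f i) Ω)
    (hΩ : IsOpen Ω) (hΩ' : IsConnected Ω)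
    (hΓ : ∀ x ∈ Ω, IsBoundedUnder (· ≤ ·) (𝓝 x) fun y ↦ ‖Γ y‖) :
    ∃ c : ι → ℝ, c ≠ 0 ∧ EqOn (fun x ↦ ∑ i, c i • f i x) 0 Ω := by
  obtain ⟨p, hp⟩ := hΩ'.nonempty
  have hdep : ¬LinearIndependent ℝ fun i ↦ f i p := fun h ↦
    h.fintype_card_le_finrank.not_gt hι
  obtain ⟨c, hcp, hc⟩ := Fintype.not_linearIndependent_iff.1 hdep
  exact ⟨c, Function.ne_iff.2 hc, (sum_smul hf c).eqOn_zero hΩ hΩ'.isPreconnected hΓ hp hcp⟩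

end IsParallelOn

end ParallelSections

section OneJets

variable {E F : Type*} [NormedAddCommGroup E] [NormedSpace ℝ E]
  [NormedAddCommGroup F] [NormedSpace ℝ F]

/-- The value at one point of the connection form on the bundle of `1`-jets whose parallel sections
are the jets `(u, Du)` of solutions of `D²u = B (u, Du)`: it sends `(a, ℓ)` to
`v ↦ (ℓ v, B (a, ℓ) v)`. -/
noncomputable def jetConnection (B : F × (E →L[ℝ] F) →L[ℝ] E →L[ℝ] E →L[ℝ] F) :
    F × (E →L[ℝ] F) →L[ℝ] E →L[ℝ] F × (E →L[ℝ] F) :=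
  (ContinuousLinearMap.prodₗᵢ ℝ).toContinuousLinearEquiv.toContinuousLinearMap ∘L
    (ContinuousLinearMap.snd ℝ F (E →L[ℝ] F)).prod B

theorem jetConnection_apply (B : F × (E →L[ℝ] F) →L[ℝ] E →L[ℝ] E →L[ℝ] F)
    (j : F × (E →L[ℝ] F)) : jetConnection B j = j.2.prod (B j) :=
  rfl

theorem norm_jetConnection_le (B : F × (E →L[ℝ] F) →L[ℝ] E →L[ℝ] E →L[ℝ] F) :
    ‖jetConnection B‖ ≤ max 1 ‖B‖ := by
  refine ContinuousLinearMap.opNorm_le_bound _ (by positivity) fun j ↦ ?_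
  rw [jetConnection_apply, ContinuousLinearMap.opNorm_prod]
  refine max_le ?_ (B.le_of_opNorm_le (le_max_right _ _) j)
  calc ‖j.2‖ ≤ ‖j‖ := norm_snd_le j
    _ ≤ max 1 ‖B‖ * ‖j‖ := le_mul_of_one_le_left (norm_nonneg j) (le_max_left _ _)

theorem isParallelOn_jetConnection_prodMk_fderiv
    {B : E → F × (E →L[ℝ] F) →L[ℝ] E →L[ℝ] E →L[ℝ] F} {u : E → F} {Ω : Set E}
    (hΩ : IsOpen Ω) (hu : DifferentiableOn ℝ u Ω) (hu' : DifferentiableOn ℝ (fderiv ℝ u) Ω)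
    (hB : ∀ x ∈ Ω, fderiv ℝ (fderiv ℝ u) x = B x (u x, fderiv ℝ u x)) :
    IsParallelOn (fun x ↦ jetConnection (B x)) (fun x ↦ (u x, fderiv ℝ u x)) Ω := fun x hx ↦ by
  rw [jetConnection_apply, ← hB x hx]
  exact (hu.hasFDerivAt (hΩ.mem_nhds hx)).prodMk (hu'.hasFDerivAt (hΩ.mem_nhds hx))

theorem finrank_prod_continuousLinearMap [FiniteDimensional ℝ E] [FiniteDimensional ℝ F] :
    finrank ℝ (F × (E →L[ℝ] F)) = (finrank ℝ E + 1) * finrank ℝ F := by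
  rw [finrank_prod, ← LinearMap.toContinuousLinearMap.finrank_eq, finrank_linearMap]
  ring

end OneJets

theorem hessian_system_dimension_bound_general {E F ι : Type*}
    [NormedAddCommGroup E] [NormedSpace ℝ E] [FiniteDimensional ℝ E]
    [NormedAddCommGroup F] [NormedSpace ℝ F] [FiniteDimensional ℝ F] [Fintype ι]
    (hι : (finrank ℝ E + 1) * finrank ℝ F < Fintype.card ι)
    {Ω : Set E} (hΩ : IsOpen Ω) (hΩ' : IsConnected Ω)
    {B : E → F × (E →L[ℝ] F) →L[ℝ] E →L[ℝ] E →L[ℝ] F}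
    (hB : ∀ x ∈ Ω, IsBoundedUnder (· ≤ ·) (𝓝 x) fun y ↦ ‖B y‖) {u : ι → E → F}
    (hu : ∀ i, DifferentiableOn ℝ (u i) Ω) (hu' : ∀ i, DifferentiableOn ℝ (fderiv ℝ (u i)) Ω)
    (hHess : ∀ i, ∀ x ∈ Ω, fderiv ℝ (fderiv ℝ (u i)) x = B x (u i x, fderiv ℝ (u i) x)) :
    ∃ c : ι → ℝ, c ≠ 0 ∧ ∀ x ∈ Ω, ∑ i, c i • u i x = 0 := by
  have hjet (i : ι) := isParallelOn_jetConnection_prodMk_fderiv hΩ (hu i) (hu' i) (hHess i)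
  have hconn : ∀ x ∈ Ω, IsBoundedUnder (· ≤ ·) (𝓝 x) fun y ↦ ‖jetConnection (B y)‖ :=
    fun x hx ↦ (isBoundedUnder_const.sup (hB x hx)).mono_le
      (.of_forall fun y ↦ norm_jetConnection_le (B y))
  obtain ⟨c, hc, hzero⟩ := IsParallelOn.exists_sum_smul_eqOn_zero
    (finrank_prod_continuousLinearMap.trans_lt hι) hjet hΩ hΩ' hconn
  exact ⟨c, hc, fun x hx ↦ by simpa [Prod.fst_sum] using congrArg Prod.fst (hzero hx)⟩

/-- Dimension bound for Hessian systems in Euclidean space: on a nonempty open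
connected set `Ω ⊆ ℝⁿ`, any `n + 2` functions that are `C²` on `Ω` and satisfy
`D²uᵢ(x)(v,w) = uᵢ(x) · A(x)(v,w)` for a continuous family of continuous
bilinear forms `A` are linearly dependent on `Ω`. -/
theorem hessian_system_dimension_bound
    {n : ℕ} (hn : 1 ≤ n) (Ω : Set (EuclideanSpace ℝ (Fin n)))
    (hΩopen : IsOpen Ω) (hΩconn : IsConnected Ω)
    (A : EuclideanSpace ℝ (Fin n) →
      (EuclideanSpace ℝ (Fin n) →L[ℝ] EuclideanSpace ℝ (Fin n) →L[ℝ] ℝ))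
    (hA : ContinuousOn A Ω)
    (u : Fin (n + 2) → EuclideanSpace ℝ (Fin n) → ℝ)
    (hu : ∀ i, ContDiffOn ℝ 2 (u i) Ω)
    (hHess : ∀ i, ∀ x ∈ Ω, ∀ v w : EuclideanSpace ℝ (Fin n),
      fderiv ℝ (fderiv ℝ (u i)) x v w = u i x * A x v w) :
    ∃ c : Fin (n + 2) → ℝ, c ≠ 0 ∧
      ∀ x ∈ Ω, ∑ i, c i * u i x = 0 := by
  let B x := ContinuousLinearMap.toSpanSingleton ℝ (A x) ∘L
    .fst ℝ ℝ (EuclideanSpace ℝ (Fin n) →L[ℝ] ℝ)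
  have hB : ContinuousOn B Ω :=
    (ContinuousLinearMap.toSpanSingletonCLE.continuous.comp_continuousOn hA).clm_comp
      continuousOn_const
  exact hessian_system_dimension_bound_general (B := B) (by simp) hΩopen hΩconn
    (fun x hx ↦ (hB.continuousAt (hΩopen.mem_nhds hx)).norm.isBoundedUnder_le)
    (fun i ↦ (hu i).differentiableOn two_ne_zero)
    (fun i ↦ ((hu i).fderiv_of_isOpen hΩopen one_add_one_eq_two.le).differentiableOn one_ne_zero)
    (fun i x hx ↦ by ext v w; simp [B, hHess i x hx])
end
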